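/- arXiv:2407.18800 — 4 statements merged into one kernel-verified Lean document; each statement's English description precedes it below -/
import Mathlib

section
/- Let T be a proper subgraph of a finite simple graph G and let L be a list assignment for G. If G is T-critical с respect to L, then the graph G − V(T) is s-irreducible for the function s defined by s(v) = |L(v)| − d_T(v) for every v ∈ V(G) \ V(T), where d_T(v) is the number of neighbors of v in T. -/
/-- A graph `K` is `s`-reducible (for list sizes given by `s : W → ℤ`):
there is a proper subgraph `H ⊊ K` such that for every list assignment `L`
with `|L(v)| ≥ s(v)` for all `v`, if `H` is `L`-colorable then `K` is `L`-colorable. -/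
def SReducibleZ {W : Type*} (K : SimpleGraph W) (s : W → ℤ) : Prop :=
  ∃ H : K.Subgraph, H ≠ ⊤ ∧ ∀ L : W → Finset ℕ, (∀ v, s v ≤ ((L v).card : ℤ)) →
    (∃ φ : W → ℕ, (∀ v ∈ H.verts, φ v ∈ L v) ∧ ∀ ⦃u v⦄, H.Adj u v → φ u ≠ φ v) →
    (∃ φ : W → ℕ, (∀ v, φ v ∈ L v) ∧ ∀ ⦃u v⦄, K.Adj u v → φ u ≠ φ v)

/-- `G` is `T`-critical with respect to `L`: `T` is a proper subgraph of `G`, and for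
every proper subgraph `G' ⊊ G` with `T ⊆ G'`, some `L`-coloring of `T` extends to an
`L`-coloring of `G'` but does not extend to an `L`-coloring of `G`. -/
def TCritical {V : Type*} (G : SimpleGraph V) (T : G.Subgraph) (L : V → Finset ℕ) : Prop :=
  T ≠ ⊤ ∧ ∀ G' : G.Subgraph, T ≤ G' → G' ≠ ⊤ →
    ∃ ψ : V → ℕ, (∀ v ∈ T.verts, ψ v ∈ L v) ∧ (∀ ⦃u v⦄, T.Adj u v → ψ u ≠ ψ v) ∧
      (∃ φ : V → ℕ, (∀ v ∈ G'.verts, φ v ∈ L v) ∧ (∀ ⦃u v⦄, G'.Adj u v → φ u ≠ φ v) ∧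
        ∀ v ∈ T.verts, φ v = ψ v) ∧
      ¬ ∃ φ : V → ℕ, (∀ v, φ v ∈ L v) ∧ (∀ ⦃u v⦄, G.Adj u v → φ u ≠ φ v) ∧
        ∀ v ∈ T.verts, φ v = ψ v

/-!
Given a proper subgraph `H` of `G − V(T)`, put the vertices of `T` back together with all their
edges to vertices of `T` and `H`. This is a proper subgraph of `G` containing `T`, so criticality
provides an `L`-coloring `φ` of it whose restriction to `T` does not extend to `G`. Deleting from
each `L(v)` the colors `φ` uses on the neighbors of `v` in `T` costs at most `d_T(v)` colors, and
`φ` still colors `H` from these smaller lists. If `G − V(T)` could then also be colored from them,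
that coloring together with `φ` on `T` would color all of `G`.
-/

section ListColoring

variable {V C : Type*} {G : SimpleGraph V} {S : Set V} {L : V → Finset C} {φ : V → C}

/-- `φ` is an `L`-coloring of the subgraph `H`. Colorings are total functions, whose values
outside `H` are irrelevant; colorings of `G` itself are those of `⊤ : G.Subgraph`. -/
structure IsListColoring (H : G.Subgraph) (L : V → Finset C) (φ : V → C) : Prop where
  mem_list : ∀ v ∈ H.verts, φ v ∈ L v
  ne_of_adj : ∀ ⦃u v⦄, H.Adj u v → φ u ≠ φ v

theorem IsListColoring.mono {H H' : G.Subgraph} (hle : H ≤ H') (hφ : IsListColoring H' L φ) :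
    IsListColoring H L φ where
  mem_list v hv := hφ.mem_list v (hle.1 hv)
  ne_of_adj _ _ huv := hφ.ne_of_adj (hle.2 huv)

section RestoreVerts

variable {H : (G.induce Sᶜ).Subgraph}

/-- The subgraph of `G` obtained from a subgraph `H` of `G − S` by putting back the vertices in
`S` and all edges of `G` from `S` to `S` or to a vertex of `H`. -/
def restoreVerts (H : (G.induce Sᶜ).Subgraph) : G.Subgraph where
  verts := S ∪ (↑) '' H.verts
  Adj u v := G.Adj u v ∧ u ∈ S ∪ (↑) '' H.verts ∧ v ∈ S ∪ (↑) '' H.verts ∧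
    ∀ (hu : u ∈ Sᶜ) (hv : v ∈ Sᶜ), H.Adj ⟨u, hu⟩ ⟨v, hv⟩
  adj_sub huv := huv.1
  edge_vert huv := huv.2.1
  symm := ⟨fun _ _ ⟨huv, hu, hv, hH⟩ => ⟨huv.symm, hv, hu, fun hv hu => (hH hu hv).symm⟩⟩

theorem coe_mem_restoreVerts_verts {v : ↥Sᶜ} :
    (v : V) ∈ (restoreVerts H).verts ↔ v ∈ H.verts := by
  refine ⟨?_, fun hv => Or.inr ⟨v, hv, rfl⟩⟩
  rintro (hv | ⟨w, hw, hwv⟩)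
  · exact absurd hv v.2
  · exact Subtype.ext hwv ▸ hw

theorem restoreVerts_adj_coe {u v : ↥Sᶜ} : (restoreVerts H).Adj u v ↔ H.Adj u v where
  mp huv := huv.2.2.2 u.2 v.2
  mpr huv := ⟨huv.adj_sub, Or.inr ⟨u, H.edge_vert huv, rfl⟩, Or.inr ⟨v, H.edge_vert huv.symm, rfl⟩,
    fun _ _ => huv⟩

theorem restoreVerts_adj_of_mem {u v : V} (hu : u ∈ S) (hv : v ∈ (restoreVerts H).verts)
    (huv : G.Adj u v) : (restoreVerts H).Adj u v :=
  ⟨huv, Or.inl hu, hv, fun hu' => absurd hu hu'⟩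

theorem le_restoreVerts {T : G.Subgraph} (hT : T.verts ⊆ S) : T ≤ restoreVerts H where
  left _ hv := Or.inl (hT hv)
  right _ _ huv := restoreVerts_adj_of_mem (hT (T.edge_vert huv))
    (Or.inl (hT (T.edge_vert huv.symm))) huv.adj_sub

theorem restoreVerts_ne_top (hH : H ≠ ⊤) : restoreVerts H ≠ ⊤ := by
  refine fun htop => hH (top_le_iff.mp ⟨fun v _ => ?_, fun u v huv => ?_⟩)
  · exact coe_mem_restoreVerts_verts.mp (htop ▸ Set.mem_univ (v : V))
  · exact restoreVerts_adj_coe.mp (htop ▸ huv)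

end RestoreVerts

open Classical in
/-- The colors of `L v` still available at `v` once the vertices in `S` are colored by `φ`. -/
noncomputable def residualList (G : SimpleGraph V) (S : Set V) (L : V → Finset C) (φ : V → C)
    (v : V) : Finset C :=
  {c ∈ L v | ∀ u ∈ S, G.Adj u v → φ u ≠ c}

theorem mem_residualList {v : V} {c : C} :
    c ∈ residualList G S L φ v ↔ c ∈ L v ∧ ∀ u ∈ S, G.Adj u v → φ u ≠ c := by
  simp only [residualList, Finset.mem_filter]

theorem card_le_card_residualList_add_ncard {v : V} (hfin : {u | u ∈ S ∧ G.Adj u v}.Finite) :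
    (L v).card ≤ (residualList G S L φ v).card + {u | u ∈ S ∧ G.Adj u v}.ncard := by
  classical
  have hcover : L v ⊆ residualList G S L φ v ∪ hfin.toFinset.image φ := by
    intro c hc
    by_cases hused : ∃ u ∈ S, G.Adj u v ∧ φ u = c
    · obtain ⟨u, hu, huv, hφu⟩ := hused
      exact Finset.mem_union_right _
        (Finset.mem_image.mpr ⟨u, hfin.mem_toFinset.mpr ⟨hu, huv⟩, hφu⟩)
    · push Not at hused
      exact Finset.mem_union_left _ (mem_residualList.mpr ⟨hc, hused⟩)
  calc (L v).card ≤ (residualList G S L φ v ∪ hfin.toFinset.image φ).card :=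
        Finset.card_le_card hcover
    _ ≤ (residualList G S L φ v).card + (hfin.toFinset.image φ).card := Finset.card_union_le _ _
    _ ≤ (residualList G S L φ v).card + hfin.toFinset.card := by gcongr; exact Finset.card_image_le
    _ = _ := by rw [Set.ncard_eq_toFinset_card _ hfin]

theorem IsListColoring.restrict_residualList {H : (G.induce Sᶜ).Subgraph}
    (hφ : IsListColoring (restoreVerts H) L φ) :
    IsListColoring H (fun v => residualList G S L φ v) (fun v => φ v) where
  mem_list v hv := by
    have hv' : (v : V) ∈ (restoreVerts H).verts := coe_mem_restoreVerts_verts.mpr hv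
    exact mem_residualList.mpr ⟨hφ.mem_list v hv',
      fun u hu huv => hφ.ne_of_adj (restoreVerts_adj_of_mem hu hv' huv)⟩
  ne_of_adj _ _ huv := hφ.ne_of_adj (restoreVerts_adj_coe.mpr huv)

theorem extend_compl_val_of_mem {χ : ↥Sᶜ → C} {v : V} (hv : v ∈ S) :
    Function.extend (↑) χ φ v = φ v :=
  Function.extend_apply' _ _ _ fun ⟨w, hw⟩ => w.2 (hw ▸ hv)

theorem extend_compl_val_of_notMem {χ : ↥Sᶜ → C} {v : V} (hv : v ∉ S) :
    Function.extend (↑) χ φ v = χ ⟨v, hv⟩ :=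
  Subtype.val_injective.extend_apply χ φ ⟨v, hv⟩

theorem IsListColoring.extend_residualList {χ : ↥Sᶜ → C}
    (hφ : IsListColoring ((⊤ : G.Subgraph).induce S) L φ)
    (hχ : IsListColoring (⊤ : (G.induce Sᶜ).Subgraph) (fun v => residualList G S L φ v) χ) :
    IsListColoring (⊤ : G.Subgraph) L (Function.extend (↑) χ φ) := by
  have havail (v : ↥Sᶜ) := mem_residualList.mp (hχ.mem_list v (Set.mem_univ v))
  refine ⟨fun v _ => ?_, fun u v huv => ?_⟩
  · by_cases hv : v ∈ S
    · rw [extend_compl_val_of_mem hv]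
      exact hφ.mem_list v hv
    · rw [extend_compl_val_of_notMem hv]
      exact (havail ⟨v, hv⟩).1
  · by_cases hu : u ∈ S <;> by_cases hv : v ∈ S
    · rw [extend_compl_val_of_mem hu, extend_compl_val_of_mem hv]
      exact hφ.ne_of_adj ⟨hu, hv, huv⟩
    · rw [extend_compl_val_of_mem hu, extend_compl_val_of_notMem hv]
      exact (havail ⟨v, hv⟩).2 u hu huv
    · rw [extend_compl_val_of_notMem hu, extend_compl_val_of_mem hv]
      exact ((havail ⟨u, hu⟩).2 v hv huv.symm).symm
    · rw [extend_compl_val_of_notMem hu, extend_compl_val_of_notMem hv]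
      exact hχ.ne_of_adj huv

end ListColoring

theorem tCritical_imp_irreducible_general {V : Type*} (G : SimpleGraph V)
    (T : G.Subgraph) (L : V → Finset ℕ)
    (hfin : ∀ v ∉ T.verts, {u | u ∈ T.verts ∧ G.Adj u v}.Finite) (hcrit : TCritical G T L) :
    ¬ SReducibleZ (G.induce ((T.verts)ᶜ : Set V))
        (fun v => ((L v.val).card : ℤ) - ({u | u ∈ T.verts ∧ G.Adj u v.val}.ncard : ℤ)) := by
  rintro ⟨H, hH, hreducible⟩
  obtain ⟨ψ, -, -, ⟨φ, hφL, hφadj, hφψ⟩, hψ⟩ :=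
    hcrit.2 (restoreVerts H) (le_restoreVerts subset_rfl) (restoreVerts_ne_top hH)
  have hφ : IsListColoring (restoreVerts H) L φ := ⟨hφL, hφadj⟩
  have hφT : IsListColoring ((⊤ : G.Subgraph).induce T.verts) L φ :=
    hφ.mono (le_restoreVerts subset_rfl)
  have hcard (v : ↥T.vertsᶜ) : ((L v).card : ℤ) - ({u | u ∈ T.verts ∧ G.Adj u v}.ncard : ℤ) ≤
      ((residualList G T.verts L φ v).card : ℤ) := by
    have hresidual := card_le_card_residualList_add_ncard (L := L) (φ := φ) (hfin v v.2)
    omega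
  obtain ⟨hφHL, hφHadj⟩ := hφ.restrict_residualList
  obtain ⟨χ, hχL, hχadj⟩ := hreducible _ hcard ⟨_, hφHL, hφHadj⟩
  have hext := hφT.extend_residualList ⟨fun v _ => hχL v, hχadj⟩
  exact hψ ⟨_, fun v => hext.mem_list v (Set.mem_univ v), hext.ne_of_adj,
    fun v hv => (extend_compl_val_of_mem hv).trans (hφψ v hv)⟩

/-- If `G` is `T`-critical with respect to `L`, then `G − V(T)` is `s`-irreducible,
where `s(v) = |L(v)| − d_T(v)` and `d_T(v)` is the number of neighbors of `v` in `T`. -/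
theorem tCritical_imp_irreducible {V : Type*} [Fintype V] (G : SimpleGraph V)
    (T : G.Subgraph) (L : V → Finset ℕ) (hcrit : TCritical G T L) :
    ¬ SReducibleZ (G.induce ((T.verts)ᶜ : Set V))
        (fun v => ((L v.val).card : ℤ) - ({u | u ∈ T.verts ∧ G.Adj u v.val}.ncard : ℤ)) :=
  tCritical_imp_irreducible_general G T L (fun _ _ => Set.toFinite _) hcrit
end

section
/- Let W be the 5-wheel: the graph with vertices u, v₁, v₂, v₃, v₄, v₅, where v₁v₂v₃v₄v₅ forms a 5-cycle and u is adjacent to all of v₁,…,v₅. Let s(u) = 5, s(v₁) = s(v₂) = 3, and s(v₃) = s(v₄) = s(v₅) = 2. Then W is s-colorable. -/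
/-- The 5-wheel: vertex `0` is the central vertex `u`, and vertices `1,…,5` form the rim
5-cycle `v₁v₂v₃v₄v₅` (edges `{1,2}, {2,3}, {3,4}, {4,5}, {5,1}`), with `0` adjacent to
all of `1,…,5`. -/
def Wheel5 : SimpleGraph (Fin 6) :=
  SimpleGraph.fromRel (fun a b => a = 0 ∨ (1 ≤ a.val ∧ b.val = a.val % 5 + 1))

/-- The list sizes: `s(u) = 5`, `s(v₁) = s(v₂) = 3`, `s(v₃) = s(v₄) = s(v₅) = 2`. -/
def sW : Fin 6 → ℕ := ![5, 3, 3, 2, 2, 2]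

/-!
Color the hub with `c`, so that every rim list loses `c`. The cycle left over is colorable as
soon as some vertex `p` has a color `x` that is missing from the list of a neighbor `q`, and all
vertices but `p` have at least two colors: color `p` with `x` and go greedily around the cycle
towards `q`.

Let `C`, `D`, `E` be the consecutive rim lists of size two, and `A` the list next to `E`. If `D` and
`E` are disjoint, take `c ∉ C ∪ D` and `x ∈ E \ {c}`, which is missing from `D`. Otherwise
`|D ∪ E| ≤ 3`, so for every color `x` the hub has a color `c ∉ D ∪ E ∪ {x}`; choose `x` in `C \ D`,
or in `A \ E` if `C ⊆ D`.
-/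

section ListColoring

variable {V W α : Type*} {G : SimpleGraph V} {H : SimpleGraph W}

/-- `G` has an `L`-coloring: a proper coloring choosing at each vertex a color from its list. -/
def IsListColorable (G : SimpleGraph V) (L : V → Finset α) : Prop :=
  ∃ φ : V → α, (∀ v, φ v ∈ L v) ∧ ∀ ⦃u v⦄, G.Adj u v → φ u ≠ φ v

/-- `G` is `s`-colorable, with lists of colors taken from the type `α`. -/
def IsSColorable (α : Type*) (G : SimpleGraph V) (s : V → ℕ) : Prop :=
  ∀ L : V → Finset α, (∀ v, s v ≤ (L v).card) → IsListColorable G L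

theorem IsListColorable.mono {L L' : V → Finset α} (hL : ∀ v, L v ⊆ L' v)
    (h : IsListColorable G L) : IsListColorable G L' := by
  obtain ⟨φ, hmem, hne⟩ := h
  exact ⟨φ, fun v => hL v (hmem v), hne⟩

theorem IsListColorable.of_comp_iso {L : W → Finset α} (e : G ≃g H)
    (h : IsListColorable G (L ∘ e)) : IsListColorable H L := by
  obtain ⟨φ, hmem, hne⟩ := h
  refine ⟨φ ∘ e.symm, fun w => ?_, fun u v huv => hne (e.symm.map_adj_iff.2 huv)⟩
  simpa using hmem (e.symm w)

theorem isSColorable_of_card_eq {s : V → ℕ}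
    (h : ∀ L : V → Finset α, (∀ v, (L v).card = s v) → IsListColorable G L) :
    IsSColorable α G s := by
  intro L hL
  choose L' hsub hcard using fun v => Finset.exists_subset_card_eq (hL v)
  exact (h L' hcard).mono hsub

theorem IsListColorable.of_erase_zero [DecidableEq α] {n : ℕ} {G : SimpleGraph (Fin (n + 1))}
    {L : Fin (n + 1) → Finset α} {c : α} (hc : c ∈ L 0)
    (h : IsListColorable (G.comap Fin.succ) fun j => (L j.succ).erase c) :
    IsListColorable G L := by
  obtain ⟨φ, hmem, hne⟩ := h
  have hφc (j) : φ j ≠ c := Finset.ne_of_mem_erase (hmem j)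
  refine ⟨Fin.cons c φ, Fin.cases hc fun j => Finset.mem_of_mem_erase (hmem j), ?_⟩
  intro u v huv
  cases u using Fin.cases with
  | zero =>
    cases v using Fin.cases with
    | zero => exact absurd huv G.irrefl
    | succ j => exact (hφc j).symm
  | succ i =>
    cases v using Fin.cases with
    | zero => exact hφc i
    | succ j => exact hne huv

end ListColoring

section Cycle

open SimpleGraph

variable {α : Type*} {n : ℕ}

theorem exists_greedy_sequence {L : Fin n → Finset α} (hL : ∀ k, 2 ≤ (L k).card) (x : α) :
    ∃ f : Fin (n + 1) → α, f 0 = x ∧ ∀ k : Fin n, f k.succ ∈ L k ∧ f k.succ ≠ f k.castSucc := by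
  choose next hmem hne using fun k => Finset.exists_mem_ne (hL k)
  let f : Fin (n + 1) → α := fun k => Fin.induction (motive := fun _ => α) x next k
  exact ⟨f, rfl, fun k => ⟨hmem k (f k.castSucc), hne k (f k.castSucc)⟩⟩

theorem cycleGraph_succ_adj {i j : Fin (n + 1)} :
    (cycleGraph (n + 1)).Adj i j ↔ i ≠ j ∧ (i = j + 1 ∨ j = i + 1) := by
  simp [cycleGraph_eq_circulantGraph, sub_eq_iff_eq_add']

theorem exists_cycleGraph_iso {i j : Fin (n + 1)} (hij : (cycleGraph (n + 1)).Adj i j) :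
    ∃ e : cycleGraph (n + 1) ≃g cycleGraph (n + 1), e 0 = i ∧ e (Fin.last n) = j := by
  have hlast : Fin.last n = -1 := eq_neg_of_add_eq_zero_left (Fin.last_add_one n)
  rw [hlast]
  obtain ⟨-, rfl | rfl⟩ := cycleGraph_succ_adj.1 hij
  · let translation : cycleGraph (n + 1) ≃g cycleGraph (n + 1) :=
      ⟨Equiv.addLeft (j + 1), by simp [cycleGraph_eq_circulantGraph]⟩
    exact ⟨translation, add_zero (j + 1), add_neg_cancel_right j 1⟩
  · let reflection : cycleGraph (n + 1) ≃g cycleGraph (n + 1) :=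
      ⟨Equiv.subLeft i, by simp [cycleGraph_eq_circulantGraph, or_comm]⟩
    exact ⟨reflection, sub_zero i, sub_neg_eq_add i 1⟩

theorem isListColorable_cycleGraph_of_notMem_last {L : Fin (n + 1) → Finset α} {x : α}
    (hx : x ∈ L 0) (hx' : x ∉ L (Fin.last n)) (hL : ∀ k ≠ 0, 2 ≤ (L k).card) :
    IsListColorable (cycleGraph (n + 1)) L := by
  obtain ⟨f, rfl, hf⟩ := exists_greedy_sequence (fun k : Fin n => hL k.succ k.succ_ne_zero) x
  have hmem (k) : f k ∈ L k := Fin.cases hx (fun k => (hf k).1) k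
  have hne (k) : f (k + 1) ≠ f k := by
    cases k using Fin.lastCases with
    | last =>
      rw [Fin.last_add_one]
      exact fun h => hx' (h ▸ hmem _)
    | cast k => simpa only [Fin.coeSucc_eq_succ] using (hf k).2
  refine ⟨f, hmem, fun u v huv => ?_⟩
  obtain ⟨-, rfl | rfl⟩ := cycleGraph_succ_adj.1 huv
  · exact hne v
  · exact (hne u).symm

theorem isListColorable_cycleGraph_of_adj {L : Fin (n + 1) → Finset α} {p q : Fin (n + 1)} {x : α}
    (hpq : (cycleGraph (n + 1)).Adj p q) (hxp : x ∈ L p) (hxq : x ∉ L q)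
    (hL : ∀ k ≠ p, 2 ≤ (L k).card) : IsListColorable (cycleGraph (n + 1)) L := by
  obtain ⟨e, rfl, rfl⟩ := exists_cycleGraph_iso hpq
  exact .of_comp_iso e (isListColorable_cycleGraph_of_notMem_last hxp hxq
    fun k hk => hL (e k) (e.injective.ne hk))

variable [DecidableEq α]

theorem isListColorable_cycleGraph_erase_of_adj {L : Fin (n + 1) → Finset α} {p q : Fin (n + 1)}
    {c x : α} (hpq : (cycleGraph (n + 1)).Adj p q) (hxp : x ∈ L p) (hxq : x ∉ L q) (hxc : x ≠ c)
    (hL : ∀ k ≠ p, 3 ≤ (L k).card ∨ 2 ≤ (L k).card ∧ c ∉ L k) :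
    IsListColorable (cycleGraph (n + 1)) fun k => (L k).erase c := by
  refine isListColorable_cycleGraph_of_adj hpq (Finset.mem_erase.2 ⟨hxc, hxp⟩)
    (fun h => hxq (Finset.mem_of_mem_erase h)) fun k hk => ?_
  obtain h3 | ⟨h2, hc⟩ := hL k hk
  · have := Finset.pred_card_le_card_erase (s := L k) (a := c)
    omega
  · rwa [Finset.erase_eq_of_notMem hc]

theorem exists_hub_color_of_disjoint {U : Finset α} {L : Fin (n + 1) → Finset α}
    {p q r : Fin (n + 1)} (hqr : (cycleGraph (n + 1)).Adj q r) (hU : 5 ≤ U.card)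
    (hp : (L p).card = 2) (hq : (L q).card = 2) (hr : (L r).card = 2)
    (hL : ∀ k, k ≠ p → k ≠ q → k ≠ r → 3 ≤ (L k).card) (hdisj : Disjoint (L q) (L r)) :
    ∃ c ∈ U, IsListColorable (cycleGraph (n + 1)) fun k => (L k).erase c := by
  have hcard : (L p ∪ L q).card < U.card := by
    have := Finset.card_union_le (L p) (L q)
    omega
  obtain ⟨c, hcU, hc⟩ := Finset.exists_mem_notMem_of_card_lt_card hcard
  obtain ⟨x, hxr, hxc⟩ := Finset.exists_mem_ne (hr ▸ Nat.one_lt_two) c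
  have hxq : x ∉ L q := Finset.disjoint_right.1 hdisj hxr
  exact ⟨c, hcU, isListColorable_cycleGraph_erase_of_adj hqr.symm hxr hxq hxc (by grind)⟩

theorem exists_hub_color_of_not_disjoint {U : Finset α} {L : Fin (n + 1) → Finset α}
    {p q r s : Fin (n + 1)} (hpq : (cycleGraph (n + 1)).Adj p q)
    (hrs : (cycleGraph (n + 1)).Adj r s) (hU : 5 ≤ U.card)
    (hp : (L p).card = 2) (hq : (L q).card = 2) (hr : (L r).card = 2) (hs : 3 ≤ (L s).card)
    (hL : ∀ k, k ≠ p → k ≠ q → k ≠ r → 3 ≤ (L k).card) (hdisj : ¬Disjoint (L q) (L r)) :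
    ∃ c ∈ U, IsListColorable (cycleGraph (n + 1)) fun k => (L k).erase c := by
  have hcard : (L q ∪ L r).card ≤ 3 := by
    have := Finset.card_union_add_card_inter (L q) (L r)
    have := Finset.card_pos.2 (Finset.not_disjoint_iff_nonempty_inter.1 hdisj)
    omega
  have exists_avoiding (x : α) : ∃ c ∈ U, x ≠ c ∧ c ∉ L q ∧ c ∉ L r := by
    have := Finset.card_insert_le x (L q ∪ L r)
    obtain ⟨c, hcU, hc⟩ := Finset.exists_mem_notMem_of_card_lt_card
      (show (insert x (L q ∪ L r)).card < U.card by omega)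
    exact ⟨c, hcU, by grind⟩
  by_cases hsub : L p ⊆ L q
  · obtain ⟨x, hxs, hxr⟩ := Finset.exists_mem_notMem_of_card_lt_card (hr.trans_lt hs)
    obtain ⟨c, hcU, hxc, hcq, hcr⟩ := exists_avoiding x
    have hcp : c ∉ L p := fun h => hcq (hsub h)
    exact ⟨c, hcU, isListColorable_cycleGraph_erase_of_adj hrs.symm hxs hxr hxc (by grind)⟩
  · obtain ⟨x, hxp, hxq⟩ := Finset.not_subset.1 hsub
    obtain ⟨c, hcU, hxc, hcq, hcr⟩ := exists_avoiding x
    exact ⟨c, hcU, isListColorable_cycleGraph_erase_of_adj hpq hxp hxq hxc (by grind)⟩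

end Cycle

section Wheel

open SimpleGraph

theorem wheel5_comap_succ : Wheel5.comap Fin.succ = cycleGraph 5 := by
  ext i j
  revert i j
  simp only [Wheel5, comap_adj, fromRel_adj]
  decide

theorem sW_eq :
    sW = Fin.cons 5 fun j : Fin 5 => if j ∈ ({2, 3, 4} : Finset _) then 2 else 3 := by
  decide

theorem wheel5_sColorable_general {α : Type*} {n : ℕ} {G : SimpleGraph (Fin (n + 5))}
    (hG : G.comap Fin.succ = cycleGraph (n + 4)) (i : Fin (n + 4)) :
    IsSColorable α G (Fin.cons 5 fun j => if j ∈ ({i, i + 1, i + 2} : Finset _) then 2 else 3) := by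
  classical
  refine isSColorable_of_card_eq fun L hL => ?_
  let R : Fin (n + 4) → Finset α := fun j => L j.succ
  have hR (j) : (R j).card = if j ∈ ({i, i + 1, i + 2} : Finset _) then 2 else 3 := hL j.succ
  have hi : (R i).card = 2 := by simp [hR]
  have hi1 : (R (i + 1)).card = 2 := by simp [hR]
  have hi2 : (R (i + 2)).card = 2 := by simp [hR]
  have hi3 : 3 ≤ (R (i + 3)).card := by simp [hR, Fin.ext_iff, Nat.mod_eq_of_lt]
  have hrest (j) (h : j ≠ i) (h1 : j ≠ i + 1) (h2 : j ≠ i + 2) : 3 ≤ (R j).card := by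
    simp [hR, h, h1, h2]
  have hadj {j k : Fin (n + 4)} (hk : k = j + 1) : (cycleGraph (n + 4)).Adj j k := by
    simp [cycleGraph_succ_adj, hk]
  have hub_color : ∃ c ∈ L 0, IsListColorable (cycleGraph (n + 4)) fun j => (R j).erase c := by
    by_cases hdisj : Disjoint (R (i + 1)) (R (i + 2))
    · have hadj12 : (cycleGraph (n + 4)).Adj (i + 1) (i + 2) := hadj (by grind)
      exact exists_hub_color_of_disjoint hadj12 (hL 0).ge hi hi1 hi2 hrest hdisj
    · have hadj23 : (cycleGraph (n + 4)).Adj (i + 2) (i + 3) := hadj (by grind)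
      exact exists_hub_color_of_not_disjoint (hadj rfl) hadj23 (hL 0).ge hi hi1 hi2 hi3 hrest hdisj
  obtain ⟨c, hc, hcol⟩ := hub_color
  exact .of_erase_zero hc (hG ▸ hcol)

end Wheel

/-- The 5-wheel `W` is `s`-colorable for the list sizes above: for every list
assignment `L` with `|L(v)| ≥ s(v)` for all `v`, `W` has a proper `L`-coloring. -/
theorem wheel5_sColorable :
    ∀ L : Fin 6 → Finset ℕ, (∀ v, sW v ≤ (L v).card) →
      ∃ φ : Fin 6 → ℕ, (∀ v, φ v ∈ L v) ∧ ∀ ⦃u v⦄, Wheel5.Adj u v → φ u ≠ φ v := by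
  exact sW_eq ▸ wheel5_sColorable_general wheel5_comap_succ 2
end

section
/- Let K be the graph with vertex set {u, v, w, x, y} and edge set {uv, uw, ux, uy, vw, wx, xy}, and let s(u) = 4 and s(v) = s(w) = s(x) = s(y) = 2. Then K is not s-colorable; that is, there exists a list assignment L with |L(z)| ≥ s(z) for every vertex z such that K has no L-coloring. -/
/-- The graph `K` with vertices `u = 0`, `v = 1`, `w = 2`, `x = 3`, `y = 4` and
edges `uv, uw, ux, uy, vw, wx, xy`. -/
def Kgraph : SimpleGraph (Fin 5) :=
  SimpleGraph.fromRel (fun a b =>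
    (a = 0 ∧ b = 1) ∨ (a = 0 ∧ b = 2) ∨ (a = 0 ∧ b = 3) ∨ (a = 0 ∧ b = 4) ∨
    (a = 1 ∧ b = 2) ∨ (a = 2 ∧ b = 3) ∨ (a = 3 ∧ b = 4))

/-- The list sizes: `s(u) = 4` and `s(v) = s(w) = s(x) = s(y) = 2`. -/
def sK : Fin 5 → ℕ := ![4, 2, 2, 2, 2]

/-!
If a clique of size `k` is coloured from a list of `k` colours, every colour of the list is used on
it, so a vertex adjacent to the whole clique cannot take any of them. Give both `v` and `w` the list
`{1, 2}`, and both `x` and `y` the list `{3, 4}`: the triangles `uvw` and `uxy` then exclude all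
four colours of `{1, 2, 3, 4}` at `u`.
-/

theorem coloring_notMem_of_isClique {V α : Type*} {G : SimpleGraph V} (C : G.Coloring α)
    {s : Finset V} {A : Finset α} {z : V} (hs : G.IsClique s) (hA : A.card ≤ s.card)
    (hC : ∀ p ∈ s, C p ∈ A) (hz : ∀ p ∈ s, G.Adj z p) : C z ∉ A := by
  have h_inj : Set.InjOn C s := fun p hp q hq hpq ↦
    by_contra fun hne ↦ C.valid (hs hp hq hne) hpq
  have h_surj : Set.SurjOn C s A := Finset.surjOn_of_injOn_of_card_le C hC h_inj hA
  intro hzA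
  obtain ⟨p, hp, hpz⟩ := h_surj hzA
  exact C.valid (hz p hp) hpz.symm

theorem coloring_notMem_of_triangle {V α : Type*} {G : SimpleGraph V} (C : G.Coloring α)
    {A : Finset α} {z p q : V} (hA : A.card ≤ 2) (hp : C p ∈ A) (hq : C q ∈ A)
    (hpq : G.Adj p q) (hzp : G.Adj z p) (hzq : G.Adj z q) : C z ∉ A := by
  classical
  refine coloring_notMem_of_isClique C (s := {p, q}) ?_ ?_ ?_ ?_
  · simp [hpq]
  · rwa [Finset.card_pair hpq.ne]
  · simp [hp, hq]
  · simp [hzp, hzq]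

/-- `K` is not `s`-colorable: there exists a list assignment `L` with `|L(z)| ≥ s(z)`
for every vertex `z` such that `K` has no proper `L`-coloring. -/
theorem Kgraph_not_sColorable :
    ∃ L : Fin 5 → Finset ℕ, (∀ z, sK z ≤ (L z).card) ∧
      ¬ ∃ φ : Fin 5 → ℕ, (∀ v, φ v ∈ L v) ∧ ∀ ⦃u v⦄, Kgraph.Adj u v → φ u ≠ φ v := by
  refine ⟨![{1, 2} ∪ {3, 4}, {1, 2}, {1, 2}, {3, 4}, {3, 4}], by decide, ?_⟩
  rintro ⟨φ, hL, hφ⟩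
  let C : Kgraph.Coloring ℕ := SimpleGraph.Coloring.mk φ fun h ↦ hφ h
  have h_uvw : φ 0 ∉ ({1, 2} : Finset ℕ) :=
    coloring_notMem_of_triangle C Finset.card_le_two (hL 1) (hL 2)
      (by simp [Kgraph]) (by simp [Kgraph]) (by simp [Kgraph])
  have h_uxy : φ 0 ∉ ({3, 4} : Finset ℕ) :=
    coloring_notMem_of_triangle C Finset.card_le_two (hL 3) (hL 4)
      (by simp [Kgraph]) (by simp [Kgraph]) (by simp [Kgraph])
  exact (Finset.mem_union.mp (hL 0)).elim h_uvw h_uxy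
end

section
/- Let K be a finite simple graph and s : V(K) → ℕ. Let D be an orientation of K, i.e., a relation on V(K) such that for all vertices a, b, exactly one of D(a,b), D(b,a) holds when a and b are adjacent in K and neither holds otherwise. Suppose s(v) > deg⁺_D(v) for every v ∈ V(K), where deg⁺_D(v) is the number of vertices u with D(v,u). If the number of spanning Eulerian subdigraphs of D with an even number of arcs differs from the number of spanning Eulerian subdigraphs of D with an odd number of arcs, then K is s-colorable. -/
/-- `A` is a spanning Eulerian subdigraph of the orientation `D`: a set of arcs of `D`
such that at every vertex the number of arcs of `A` leaving it equals the number of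
arcs of `A` entering it (the empty arc set is allowed). -/
def IsSpanningEulerian {V : Type*} [Fintype V] [DecidableEq V] (D : V → V → Prop)
    (A : Finset (V × V)) : Prop :=
  (∀ p ∈ A, D p.1 p.2) ∧
    ∀ v : V, (A.filter (fun p => p.1 = v)).card = (A.filter (fun p => p.2 = v)).card

/-!
The graph polynomial `∏ (X u - X v)`, over the arcs `(u, v)` of `D`, vanishes at exactly the
colorings giving some arc equal ends. Expanding the product amounts to choosing a set `A` of arcs
from which to take `-X v` instead of `X u`. The monomial so obtained is the one with the outdegrees
of `D` as exponents precisely when reversing `A` preserves all outdegrees, that is, when `A` is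
Eulerian. Hence the coefficient of that monomial is the number of even minus the number of odd
spanning Eulerian subdigraphs. When it is nonzero, the combinatorial Nullstellensatz yields a
nonvanishing point in every grid whose sides exceed the outdegrees.
-/

section ArcSets

variable {V : Type*}

/-- The outdegree sequence of a set of arcs, as the exponent vector of a monomial in variables
indexed by the vertices. -/
noncomputable def outDegrees (A : Finset (V × V)) : V →₀ ℕ :=
  ∑ p ∈ A, Finsupp.single p.1 1

/-- The indegree sequence of a set of arcs, as the exponent vector of a monomial in variables
indexed by the vertices. -/
noncomputable def inDegrees (A : Finset (V × V)) : V →₀ ℕ :=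
  ∑ p ∈ A, Finsupp.single p.2 1

theorem outDegrees_apply [DecidableEq V] (A : Finset (V × V)) (v : V) :
    outDegrees A v = (A.filter (fun p => p.1 = v)).card := by
  simp [outDegrees, Finsupp.finsetSum_apply, Finsupp.single_apply]

theorem inDegrees_apply [DecidableEq V] (A : Finset (V × V)) (v : V) :
    inDegrees A v = (A.filter (fun p => p.2 = v)).card := by
  simp [inDegrees, Finsupp.finsetSum_apply, Finsupp.single_apply]

theorem degree_outDegrees (A : Finset (V × V)) : (outDegrees A).degree = A.card := by
  simp [outDegrees, map_sum]

theorem outDegrees_add_outDegrees_sdiff [DecidableEq V] {A E : Finset (V × V)} (hA : A ⊆ E) :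
    outDegrees A + outDegrees (E \ A) = outDegrees E := by
  rw [add_comm]
  exact Finset.sum_sdiff hA

end ArcSets

section GraphPolynomial

open MvPolynomial

variable {V : Type*} (R : Type*) [CommRing R]

/-- The graph polynomial of a set of arcs. Reversing an arc only changes its sign, so it is
determined up to sign by the underlying multigraph. -/
noncomputable def graphPolynomial (E : Finset (V × V)) : MvPolynomial V R :=
  ∏ p ∈ E, (X p.1 - X p.2)

theorem isHomogeneous_graphPolynomial (E : Finset (V × V)) :
    (graphPolynomial R E).IsHomogeneous E.card := by
  simpa [graphPolynomial] using IsHomogeneous.prod E _ (fun _ => 1) fun p _ =>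
    (isHomogeneous_X R p.1).sub (isHomogeneous_X R p.2)

theorem graphPolynomial_eq_sum_monomial [DecidableEq V] (E : Finset (V × V)) :
    graphPolynomial R E =
      ∑ A ∈ E.powerset, monomial (inDegrees A + outDegrees (E \ A)) ((-1) ^ A.card) := by
  rw [graphPolynomial, Finset.prod_sub]
  refine Finset.sum_congr rfl fun A _ => ?_
  have hfst : ∏ p ∈ E \ A, (X p.1 : MvPolynomial V R) = monomial (outDegrees (E \ A)) 1 :=
    (monomial_sum_one _ _).symm
  have hsnd : ∏ p ∈ A, (X p.2 : MvPolynomial V R) = monomial (inDegrees A) 1 :=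
    (monomial_sum_one _ _).symm
  have hsign : (-1 : MvPolynomial V R) ^ A.card = C ((-1) ^ A.card) := by simp
  rw [hfst, hsnd, hsign, C_mul_monomial, monomial_mul, mul_one, mul_one, add_comm]

theorem coeff_outDegrees_graphPolynomial [DecidableEq V] (E : Finset (V × V)) :
    (graphPolynomial R E).coeff (outDegrees E) =
      ∑ A ∈ E.powerset with outDegrees A = inDegrees A, (-1) ^ A.card := by
  rw [graphPolynomial_eq_sum_monomial, coeff_sum, Finset.sum_filter]
  refine Finset.sum_congr rfl fun A hA => ?_
  rw [coeff_monomial, ← outDegrees_add_outDegrees_sdiff (Finset.mem_powerset.mp hA)]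
  simp only [add_left_inj, eq_comm]

variable {R}

theorem eval_graphPolynomial_ne_zero_iff [IsDomain R] (E : Finset (V × V)) (x : V → R) :
    eval x (graphPolynomial R E) ≠ 0 ↔ ∀ p ∈ E, x p.1 ≠ x p.2 := by
  simp [graphPolynomial, map_prod, Finset.prod_ne_zero_iff, sub_ne_zero]

theorem exists_mem_forall_ne_of_coeff_graphPolynomial_ne_zero [Finite V] [IsDomain R]
    {E : Finset (V × V)} (hE : (graphPolynomial R E).coeff (outDegrees E) ≠ 0)
    (S : V → Finset R) (hS : ∀ v, outDegrees E v < (S v).card) :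
    ∃ x : V → R, (∀ v, x v ∈ S v) ∧ ∀ p ∈ E, x p.1 ≠ x p.2 := by
  have hdegree : (graphPolynomial R E).totalDegree = (outDegrees E).degree := by
    rw [degree_outDegrees]
    exact (isHomogeneous_graphPolynomial R E).totalDegree (ne_zero_iff.mpr ⟨_, hE⟩)
  obtain ⟨x, hx, hne⟩ :=
    combinatorial_nullstellensatz_exists_eval_nonzero _ _ hE hdegree S hS
  exact ⟨x, hx, (eval_graphPolynomial_ne_zero_iff E x).mp hne⟩

end GraphPolynomial

theorem sum_neg_one_pow_eq_card_even_sub_card_odd {ι R : Type*} [Ring R] (s : Finset ι)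
    (f : ι → ℕ) :
    ∑ i ∈ s, (-1 : R) ^ f i =
      (s.filter (fun i => Even (f i))).card - (s.filter (fun i => ¬ Even (f i))).card := by
  simp only [neg_one_pow_eq_ite, Finset.sum_ite, Finset.sum_const, nsmul_eq_mul]
  simp [sub_eq_add_neg]

section Digraph

variable {V : Type*} [Fintype V]

open Classical in
/-- The arc set of a digraph given by its adjacency relation. -/
noncomputable def arcs (D : V → V → Prop) : Finset (V × V) :=
  Finset.univ.filter (fun p => D p.1 p.2)

@[simp]
theorem mem_arcs {D : V → V → Prop} {p : V × V} : p ∈ arcs D ↔ D p.1 p.2 := by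
  simp [arcs]

theorem outDegrees_arcs_apply (D : V → V → Prop) (v : V) :
    outDegrees (arcs D) v = {u : V | D v u}.ncard := by
  classical
  have himage : ((arcs D).filter (fun p => p.1 = v) : Set (V × V)) =
      Prod.mk v '' {u : V | D v u} := by
    ext ⟨a, b⟩
    suffices D a b ∧ a = v ↔ D v b ∧ v = a by simpa
    constructor <;> rintro ⟨hab, rfl⟩ <;> exact ⟨hab, rfl⟩
  rw [outDegrees_apply, ← Set.ncard_coe_finset, himage,
    Set.ncard_image_of_injective _ (Prod.mk_right_injective v)]

variable [DecidableEq V]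

theorem isSpanningEulerian_iff {D : V → V → Prop} {A : Finset (V × V)} :
    IsSpanningEulerian D A ↔ A ⊆ arcs D ∧ outDegrees A = inDegrees A := by
  simp [IsSpanningEulerian, Finset.subset_iff, Finsupp.ext_iff, outDegrees_apply, inDegrees_apply]

theorem coeff_graphPolynomial_arcs (R : Type*) [CommRing R] (D : V → V → Prop) :
    (graphPolynomial R (arcs D)).coeff (outDegrees (arcs D)) =
      ({A : Finset (V × V) | IsSpanningEulerian D A ∧ Even A.card}.ncard : R) -
        {A : Finset (V × V) | IsSpanningEulerian D A ∧ ¬ Even A.card}.ncard := by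
  rw [coeff_outDegrees_graphPolynomial, sum_neg_one_pow_eq_card_even_sub_card_odd,
    ← Set.ncard_coe_finset, ← Set.ncard_coe_finset]
  simp [isSpanningEulerian_iff]

end Digraph

theorem alon_tarsi_general {V α : Type*} [Fintype V] [DecidableEq V] (D : V → V → Prop)
    (hAT : {A : Finset (V × V) | IsSpanningEulerian D A ∧ Even A.card}.ncard ≠
           {A : Finset (V × V) | IsSpanningEulerian D A ∧ ¬ Even A.card}.ncard)
    (L : V → Finset α) (hL : ∀ v, {u : V | D v u}.ncard < (L v).card) :
    ∃ φ : V → α, (∀ v, φ v ∈ L v) ∧ ∀ ⦃u v⦄, D u v → φ u ≠ φ v := by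
  -- Reading the colors as indeterminates places them in an integral domain of characteristic zero.
  let color : α ↪ MvPolynomial α ℤ := ⟨MvPolynomial.X, MvPolynomial.X_injective⟩
  have hcoeff : (graphPolynomial (MvPolynomial α ℤ) (arcs D)).coeff (outDegrees (arcs D)) ≠ 0 := by
    rw [coeff_graphPolynomial_arcs, sub_ne_zero]
    exact_mod_cast hAT
  obtain ⟨x, hx, hne⟩ := exists_mem_forall_ne_of_coeff_graphPolynomial_ne_zero hcoeff
    (fun v => (L v).map color) fun v => by simpa [outDegrees_arcs_apply] using hL v
  simp only [Finset.mem_map] at hx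
  choose φ hφ hφx using hx
  refine ⟨φ, hφ, fun u v huv heq => hne (u, v) (mem_arcs.mpr huv) ?_⟩
  rw [← hφx u, ← hφx v, heq]

/-- The Alon–Tarsi theorem (in the form of list sizes `s`): if `D` is an orientation of
`K` with `s(v) > deg⁺(v)` for every vertex `v`, and the numbers of even and odd
spanning Eulerian subdigraphs of `D` differ, then `K` is `s`-colorable. -/
theorem alon_tarsi {V : Type*} [Fintype V] [DecidableEq V] (K : SimpleGraph V)
    (s : V → ℕ) (D : V → V → Prop)
    (horient : ∀ a b : V, (K.Adj a b → (D a b ↔ ¬ D b a)) ∧ (¬ K.Adj a b → ¬ D a b))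
    (hdeg : ∀ v : V, {u : V | D v u}.ncard < s v)
    (hAT : {A : Finset (V × V) | IsSpanningEulerian D A ∧ Even A.card}.ncard ≠
           {A : Finset (V × V) | IsSpanningEulerian D A ∧ ¬ Even A.card}.ncard) :
    ∀ L : V → Finset ℕ, (∀ v, s v ≤ (L v).card) →
      ∃ φ : V → ℕ, (∀ v, φ v ∈ L v) ∧ ∀ ⦃u v⦄, K.Adj u v → φ u ≠ φ v := by
  intro L hL
  obtain ⟨φ, hφ, hne⟩ := alon_tarsi_general D hAT L fun v => (hdeg v).trans_le (hL v)
  refine ⟨φ, hφ, fun u v huv => ?_⟩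
  by_cases harc : D u v
  · exact hne harc
  · exact (hne (not_not.mp (mt ((horient u v).1 huv).2 harc))).symm
end
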